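/- Let α > 0 be a real constant and (θ,φ), (θ',φ') two angle pairs with angle-difference parameters b, c. If α·b is not an integer or α·c is not an integer, then (1/(Q_h·Q_v))·Σ_{q=1}^{Q_h·Q_v} e_q(θ,φ)·conj(e_q(θ',φ')) tends to 0 as Q_h → ∞ and Q_v → ∞ jointly (i.e., along the product filter atTop ×ˢ atTop on pairs (Q_h, Q_v) of positive integers). -/

import Mathlib

/-!
Writing `q - 1 = i + Qh * j` with `i < Qh`, each summand equals `z ^ i * w ^ j`, where
`z = exp (2πi α b)` and `w = exp (2πi α c)` lie on the unit circle. Hence the normalized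
correlation factors as the product of the geometric means `(1 / Qh) ∑ z ^ i` and
`(1 / Qv) ∑ w ^ j` (`sum_mod_div`). Each mean has norm at most `1` (`norm_geomMean_le_one`),
and a mean whose ratio differs from `1` tends to `0` because its geometric sum stays bounded
(`tendsto_geomMean`). The ratio `z` (resp. `w`) differs from `1` exactly when `α b`
(resp. `α c`) is not an integer.
-/

open scoped BigOperators

/-- The URA steering coefficient of antenna `q ∈ {1,…,Q_h Q_v}` for antenna spacing `α = d/λ`
and zenith/azimuthal angles `θ, φ`. -/
noncomputable def steerCoef (Qh : ℕ) (α θ φ : ℝ) (q : ℕ) : ℂ :=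
  Complex.exp (2 * Real.pi * Complex.I * (α : ℂ) *
    ((((q - 1) % Qh : ℕ) : ℂ) * ((Real.sin φ * Real.sin θ : ℝ) : ℂ) +
      (((q - 1) / Qh : ℕ) : ℂ) * ((Real.cos θ : ℝ) : ℂ)))

/-- The average of the first `N` powers `1, x, …, x ^ (N - 1)` (equal to `0` for `N = 0`). -/
noncomputable def geomMean (x : ℂ) (N : ℕ) : ℂ :=
  (1 / (N : ℂ)) * ∑ k ∈ Finset.range N, x ^ k

/-- The point `exp (2πi t)` of the unit circle. -/
noncomputable def phase (t : ℝ) : ℂ :=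
  Complex.exp (((2 * Real.pi * t : ℝ) : ℂ) * Complex.I)

lemma norm_phase (t : ℝ) : ‖phase t‖ = 1 :=
  Complex.norm_exp_ofReal_mul_I _

lemma phase_ne_one {t : ℝ} (ht : ∀ m : ℤ, t ≠ m) : phase t ≠ 1 := by
  intro h
  obtain ⟨m, hm⟩ := Complex.exp_eq_one_iff.1 h
  apply ht m
  have h2 : (2 * Real.pi * Complex.I : ℂ) ≠ 0 := Complex.two_pi_I_ne_zero
  have h3 : (t : ℂ) = m := by
    apply mul_right_cancel₀ h2
    rw [← hm]
    push_cast
    ring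
  exact_mod_cast h3

lemma norm_geomMean_le_one {x : ℂ} (hx : ‖x‖ = 1) (N : ℕ) : ‖geomMean x N‖ ≤ 1 := by
  have hsum : ‖∑ k ∈ Finset.range N, x ^ k‖ ≤ N := by
    refine (norm_sum_le _ _).trans ?_
    simp [hx]
  rw [geomMean, norm_mul, norm_div, norm_one, Complex.norm_natCast, one_div_mul_eq_div]
  exact div_le_one_of_le₀ hsum N.cast_nonneg

lemma tendsto_geomMean {x : ℂ} (hx : ‖x‖ = 1) (hx1 : x ≠ 1) :
    Filter.Tendsto (geomMean x) Filter.atTop (nhds 0) := by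
  refine squeeze_zero_norm (a := fun N : ℕ => (2 / ‖x - 1‖) / (N : ℝ)) (fun N => ?_)
    (tendsto_const_div_atTop_nhds_zero_nat _)
  rw [geomMean, norm_mul, norm_div, norm_one, Complex.norm_natCast, one_div_mul_eq_div,
    geom_sum_eq hx1, norm_div]
  gcongr
  calc ‖x ^ N - 1‖ ≤ ‖x ^ N‖ + ‖(1 : ℂ)‖ := norm_sub_le _ _
    _ = 2 := by rw [norm_pow, hx]; norm_num

lemma sum_mod_div (z w : ℂ) {m : ℕ} (hm : 0 < m) (n : ℕ) :
    ∑ k ∈ Finset.range (m * n), z ^ (k % m) * w ^ (k / m) =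
      (∑ i ∈ Finset.range m, z ^ i) * ∑ j ∈ Finset.range n, w ^ j := by
  induction n with
  | zero => simp
  | succ n ih =>
    rw [Nat.mul_succ, Finset.sum_range_add, ih, Finset.sum_range_succ _ n, mul_add,
      Finset.sum_mul _ _ (w ^ n)]
    congr 1
    refine Finset.sum_congr rfl fun i hi => ?_
    have hi' := Finset.mem_range.1 hi
    rw [Nat.mul_add_mod, Nat.mod_eq_of_lt hi', Nat.mul_add_div hm, Nat.div_eq_of_lt hi', add_zero]

lemma steerCoef_mul_conj (Qh : ℕ) (α θ φ θ' φ' : ℝ) (k : ℕ) :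
    steerCoef Qh α θ φ (1 + k) * (starRingEnd ℂ) (steerCoef Qh α θ' φ' (1 + k)) =
      phase (α * (Real.sin φ * Real.sin θ - Real.sin φ' * Real.sin θ')) ^ (k % Qh) *
        phase (α * (Real.cos θ - Real.cos θ')) ^ (k / Qh) := by
  simp only [steerCoef, phase, Nat.add_sub_cancel_left]
  rw [← Complex.exp_conj, ← Complex.exp_nat_mul, ← Complex.exp_nat_mul, ← Complex.exp_add,
    ← Complex.exp_add]
  congr 1
  simp only [map_mul, map_add, Complex.conj_ofReal, Complex.conj_I, Complex.conj_natCast,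
    Complex.conj_ofNat]
  push_cast
  ring

/-- The factorization also holds for `m = 0` or `n = 0`, where both sides are `0`. -/
lemma correlation_eq_geomMean_mul (α θ φ θ' φ' : ℝ) (m n : ℕ) :
    (1 / ((m * n : ℕ) : ℂ)) * ∑ q ∈ Finset.Icc 1 (m * n),
        steerCoef m α θ φ q * (starRingEnd ℂ) (steerCoef m α θ' φ' q) =
      geomMean (phase (α * (Real.sin φ * Real.sin θ - Real.sin φ' * Real.sin θ'))) m *
        geomMean (phase (α * (Real.cos θ - Real.cos θ'))) n := by
  rcases Nat.eq_zero_or_pos m with rfl | hm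
  · simp [geomMean]
  have hIcc : Finset.Icc 1 (m * n) = Finset.Ico 1 (m * n + 1) := by
    ext q
    simp
  rw [hIcc, Finset.sum_Ico_eq_sum_range, Nat.add_sub_cancel]
  simp only [steerCoef_mul_conj]
  rw [sum_mod_div _ _ hm, geomMean, geomMean, Nat.cast_mul]
  ring

/-- Vanishing of the normalized spatial correlation between two paths with distinct angles,
as the URA size grows jointly in both dimensions. -/
theorem normalized_spatial_correlation_tendsto_zero
    (α : ℝ) (hα : 0 < α) (θ φ θ' φ' : ℝ)
    (hsep : (∀ m : ℤ, α * (Real.sin φ * Real.sin θ - Real.sin φ' * Real.sin θ') ≠ m) ∨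
            (∀ m : ℤ, α * (Real.cos θ - Real.cos θ') ≠ m)) :
    Filter.Tendsto
      (fun P : ℕ × ℕ =>
        (1 / ((P.1 * P.2 : ℕ) : ℂ)) *
          ∑ q ∈ Finset.Icc 1 (P.1 * P.2),
            steerCoef P.1 α θ φ q * (starRingEnd ℂ) (steerCoef P.1 α θ' φ' q))
      (Filter.atTop ×ˢ Filter.atTop) (nhds 0) := by
  simp only [correlation_eq_geomMean_mul]
  rcases hsep with h | h
  · refine squeeze_zero_norm (fun P => ?_)
      ((tendsto_zero_iff_norm_tendsto_zero.1
        (tendsto_geomMean (norm_phase _) (phase_ne_one h))).comp Filter.tendsto_fst)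
    rw [norm_mul]
    exact mul_le_of_le_one_right (norm_nonneg _) (norm_geomMean_le_one (norm_phase _) _)
  · refine squeeze_zero_norm (fun P => ?_)
      ((tendsto_zero_iff_norm_tendsto_zero.1
        (tendsto_geomMean (norm_phase _) (phase_ne_one h))).comp Filter.tendsto_snd)
    rw [norm_mul]
    exact mul_le_of_le_one_left (norm_nonneg _) (norm_geomMean_le_one (norm_phase _) _)
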